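/- Let x : ℝ → ℝ³ be a Kepler solution on an open interval I (twice differentiable, x(t) ≠ 0, x''(t) = −(G·M/4)·x(t)/‖x(t)‖³ on I, with G, M > 0), fix t₀ ∈ I, and let E := (1/2)‖x'(t₀)‖² − G·M/(4‖x(t₀)‖) and J := ‖x(t₀) × x'(t₀)‖ be the conserved energy and angular momentum magnitude. Then the radial distance r(t) := ‖x(t)‖ is differentiable on I and for every t ∈ I its derivative satisfies (r'(t))² = 2E + G·M/(2 r(t)) − J²/r(t)². -/

import Mathlib

/-- The cross product on `ℝ³ = EuclideanSpace ℝ (Fin 3)`. -/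
noncomputable def cross3 (a b : EuclideanSpace ℝ (Fin 3)) : EuclideanSpace ℝ (Fin 3) :=
  (EuclideanSpace.equiv (Fin 3) ℝ).symm
    ![a 1 * b 2 - a 2 * b 1, a 2 * b 0 - a 0 * b 2, a 0 * b 1 - a 1 * b 0]

/-!
In any real inner product space the radial velocity of a curve `x` with velocity `v` is
`⟪x, v⟫ / ‖x‖`, and its square is `‖v‖²` minus the Gram determinant of `x` and `v` divided by
`‖x‖²`. Under a central force the Gram determinant, which in `ℝ³` is the squared norm of the
angular momentum (Lagrange's identity), is constant, and conservation of energy expresses `‖v‖²`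
through `‖x‖`.
-/

theorem eq_of_hasDerivWithinAt_zero {𝕜 E : Type*} [RCLike 𝕜] [NormedAddCommGroup E]
    [NormedSpace 𝕜 E] {f : 𝕜 → E} {s : Set 𝕜} (hs : Convex ℝ s)
    (hf : ∀ t ∈ s, HasDerivWithinAt f 0 s t) {t₀ t : 𝕜} (ht₀ : t₀ ∈ s) (ht : t ∈ s) :
    f t = f t₀ := by
  have hbound := hs.norm_image_sub_le_of_norm_hasDerivWithin_le (C := 0) hf (by simp) ht₀ ht
  rwa [zero_mul, norm_le_zero_iff, sub_eq_zero] at hbound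

section InnerProductSpace

variable {F : Type*} [NormedAddCommGroup F] [InnerProductSpace ℝ F]

/-- The Gram determinant of two vectors, that is, the squared area of the parallelogram they span.
For a position and a velocity it plays the role of the squared angular momentum in a space of any
dimension, where no cross product is available. -/
def gramDet (a b : F) : ℝ :=
  ‖a‖ ^ 2 * ‖b‖ ^ 2 - inner ℝ a b ^ 2

/-- The energy of a particle of unit mass with position `x` and velocity `v` in the central
potential whose value at distance `r` from the origin is `U r`. -/
noncomputable def centralEnergy (U : ℝ → ℝ) (x v : F) : ℝ :=
  1 / 2 * ‖v‖ ^ 2 + U ‖x‖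

theorem sq_inner_div_norm_eq_sub_gramDet {a : F} (ha : a ≠ 0) (b : F) :
    (inner ℝ a b / ‖a‖) ^ 2 = ‖b‖ ^ 2 - gramDet a b / ‖a‖ ^ 2 := by
  have ha_norm : ‖a‖ ≠ 0 := norm_ne_zero_iff.mpr ha
  rw [gramDet]
  field_simp
  ring

variable {x v : ℝ → F} {s : Set ℝ} {t₀ t : ℝ}

theorem hasDerivWithinAt_norm {x' : F} (hx : HasDerivWithinAt x x' s t) (hx0 : x t ≠ 0) :
    HasDerivWithinAt (fun τ => ‖x τ‖) (inner ℝ (x t) x' / ‖x t‖) s t := by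
  have hsqrt := hx.norm_sq.sqrt (pow_ne_zero 2 (norm_ne_zero_iff.mpr hx0))
  simp only [Real.sqrt_sq (norm_nonneg _)] at hsqrt
  exact hsqrt.congr_deriv (mul_div_mul_left _ _ two_ne_zero)

theorem hasDerivWithinAt_gramDet_zero {c : ℝ} (hx : HasDerivWithinAt x (v t) s t)
    (hv : HasDerivWithinAt v (c • x t) s t) :
    HasDerivWithinAt (fun τ => gramDet (x τ) (v τ)) 0 s t := by
  refine ((hx.norm_sq.mul hv.norm_sq).sub ((hx.inner ℝ hv).pow 2)).congr_deriv ?_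
  simp only [real_inner_smul_right, real_inner_self_eq_norm_sq, real_inner_comm (x t) (v t)]
  ring

theorem hasDerivWithinAt_centralEnergy_zero {U : ℝ → ℝ} {U' : ℝ} (hx0 : x t ≠ 0)
    (hU : HasDerivAt U U' ‖x t‖) (hx : HasDerivWithinAt x (v t) s t)
    (hv : HasDerivWithinAt v (-(U' / ‖x t‖) • x t) s t) :
    HasDerivWithinAt (fun τ => centralEnergy U (x τ) (v τ)) 0 s t := by
  have hpotential := hU.comp_hasDerivWithinAt t (hasDerivWithinAt_norm hx hx0)
  refine ((hv.norm_sq.const_mul (1 / 2)).add hpotential).congr_deriv ?_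
  rw [real_inner_smul_right, real_inner_comm]
  ring

theorem sq_radial_velocity_of_central_potential {U U' : ℝ → ℝ} (hs : s.OrdConnected)
    (hx0 : ∀ τ ∈ s, x τ ≠ 0) (hU : ∀ τ ∈ s, HasDerivAt U (U' ‖x τ‖) ‖x τ‖)
    (hx : ∀ τ ∈ s, HasDerivWithinAt x (v τ) s τ)
    (hv : ∀ τ ∈ s, HasDerivWithinAt v (-(U' ‖x τ‖ / ‖x τ‖) • x τ) s τ)
    (ht₀ : t₀ ∈ s) (ht : t ∈ s) :
    (inner ℝ (x t) (v t) / ‖x t‖) ^ 2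
      = 2 * (centralEnergy U (x t₀) (v t₀) - U ‖x t‖) - gramDet (x t₀) (v t₀) / ‖x t‖ ^ 2 := by
  have henergy : centralEnergy U (x t) (v t) = centralEnergy U (x t₀) (v t₀) :=
    eq_of_hasDerivWithinAt_zero hs.convex
      (fun τ hτ => hasDerivWithinAt_centralEnergy_zero (hx0 τ hτ) (hU τ hτ) (hx τ hτ) (hv τ hτ))
      ht₀ ht
  have hgram : gramDet (x t) (v t) = gramDet (x t₀) (v t₀) :=
    eq_of_hasDerivWithinAt_zero hs.convex
      (fun τ hτ => hasDerivWithinAt_gramDet_zero (hx τ hτ) (hv τ hτ)) ht₀ ht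
  rw [sq_inner_div_norm_eq_sub_gramDet (hx0 t ht), hgram, ← henergy, centralEnergy]
  ring

theorem kepler_radial_velocity_general {k : ℝ} (hs : s.OrdConnected) (hx0 : ∀ τ ∈ s, x τ ≠ 0)
    (hx : ∀ τ ∈ s, HasDerivWithinAt x (v τ) s τ)
    (hv : ∀ τ ∈ s, HasDerivWithinAt v ((-k / ‖x τ‖ ^ 3) • x τ) s τ)
    (ht₀ : t₀ ∈ s) (ht : t ∈ s) :
    HasDerivWithinAt (fun τ => ‖x τ‖) (inner ℝ (x t) (v t) / ‖x t‖) s t ∧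
    (inner ℝ (x t) (v t) / ‖x t‖) ^ 2
      = 2 * (1 / 2 * ‖v t₀‖ ^ 2 - k / ‖x t₀‖) + 2 * k / ‖x t‖
        - gramDet (x t₀) (v t₀) / ‖x t‖ ^ 2 := by
  have hpotential : ∀ τ ∈ s, HasDerivAt (fun r => -k * r⁻¹) (k / ‖x τ‖ ^ 2) ‖x τ‖ := fun τ hτ =>
    ((hasDerivAt_inv (norm_ne_zero_iff.mpr (hx0 τ hτ))).const_mul (-k)).congr_deriv (by ring)
  have hforce : ∀ τ ∈ s, HasDerivWithinAt v (-(k / ‖x τ‖ ^ 2 / ‖x τ‖) • x τ) s τ := fun τ hτ =>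
    (hv τ hτ).congr_deriv (by rw [div_div, ← pow_succ, neg_div])
  refine ⟨hasDerivWithinAt_norm (hx t ht) (hx0 t ht), ?_⟩
  rw [sq_radial_velocity_of_central_potential (U' := fun r => k / r ^ 2) hs hx0 hpotential hx
    hforce ht₀ ht, centralEnergy]
  ring

end InnerProductSpace

open Matrix WithLp in
theorem cross3_eq_toLp_crossProduct (a b : EuclideanSpace ℝ (Fin 3)) :
    cross3 a b = toLp 2 (ofLp a ⨯₃ ofLp b) := by
  rw [cross_apply]
  rfl

theorem norm_cross3_sq (a b : EuclideanSpace ℝ (Fin 3)) : ‖cross3 a b‖ ^ 2 = gramDet a b := by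
  simp only [gramDet, ← real_inner_self_eq_norm_sq]
  simp only [cross3_eq_toLp_crossProduct, EuclideanSpace.inner_eq_star_dotProduct, star_trivial,
    cross_dot_cross, dotProduct_comm b.ofLp a.ofLp, sq]

/-- Radial equation for a Kepler solution: with `E` and `J` the conserved energy and
angular momentum magnitude (evaluated at `t₀ ∈ I`), the radial distance `r(t) = ‖x(t)‖`
is differentiable on `I` and satisfies `(r')² = 2E + G M/(2r) - J²/r²`. -/
theorem kepler_radial_velocity
    (G M : ℝ) (hG : 0 < G) (hM : 0 < M)
    (I : Set ℝ) (hIopen : IsOpen I) (hIconn : I.OrdConnected)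
    (x : ℝ → EuclideanSpace ℝ (Fin 3))
    (hx1 : ∀ t ∈ I, DifferentiableAt ℝ x t)
    (hx2 : ∀ t ∈ I, DifferentiableAt ℝ (deriv x) t)
    (hx0 : ∀ t ∈ I, x t ≠ 0)
    (hode : ∀ t ∈ I, deriv (deriv x) t = (-(G * M / 4) / ‖x t‖ ^ 3) • x t)
    (t₀ : ℝ) (ht₀ : t₀ ∈ I)
    (Ept : ℝ) (hE : Ept = (1 / 2) * ‖deriv x t₀‖ ^ 2 - G * M / (4 * ‖x t₀‖))
    (J : ℝ) (hJlen : J = ‖cross3 (x t₀) (deriv x t₀)‖)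
    (t : ℝ) (ht : t ∈ I) :
    DifferentiableAt ℝ (fun τ => ‖x τ‖) t ∧
    (deriv (fun τ => ‖x τ‖) t) ^ 2
      = 2 * Ept + G * M / (2 * ‖x t‖) - J ^ 2 / ‖x t‖ ^ 2 := by
  obtain ⟨hr, hsq⟩ := kepler_radial_velocity_general hIconn hx0
    (fun τ hτ => (hx1 τ hτ).hasDerivAt.hasDerivWithinAt)
    (fun τ hτ => hode τ hτ ▸ (hx2 τ hτ).hasDerivAt.hasDerivWithinAt) ht₀ ht
  replace hr := hr.hasDerivAt (hIopen.mem_nhds ht)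
  refine ⟨hr.differentiableAt, ?_⟩
  rw [hr.deriv, hsq, hE, hJlen, norm_cross3_sq]
  ring
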